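/- arXiv:math/0508532 — 4 statements merged into one kernel-verified Lean document; each statement's English description precedes it below -/
import Mathlib

section
/- Let X be a set with infinitely many points and let R be an anti-symmetric cross ratio on X. Then for all pairwise distinct points ξ, ζ, η ∈ X and all points ν, ν′ ∈ X \ {ξ, ζ, η} one has R(ξ,ζ,η,ν) + R(ζ,η,ξ,ν) + R(η,ξ,ζ,ν) = R(ξ,ζ,η,ν′) + R(ζ,η,ξ,ν′) + R(η,ξ,ζ,ν′); consequently φ(ξ,η,ζ) := (1/2)(R(ξ,ζ,η,ν) + R(ζ,η,ξ,ν) + R(η,ξ,ζ,ν)) is well defined independently of the choice of ν, and if |R| ≤ M on all quadruples of pairwise distinct points then |φ(ξ,η,ζ)| ≤ 3M/2. -/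
/-- Pairwise distinctness of three points. -/
def PD3 {X : Type*} (a b c : X) : Prop := a ≠ b ∧ a ≠ c ∧ b ≠ c

/-- Pairwise distinctness of four points. -/
def PD4 {X : Type*} (a b c d : X) : Prop :=
  a ≠ b ∧ a ≠ c ∧ a ≠ d ∧ b ≠ c ∧ b ≠ d ∧ c ≠ d

/-- Pairwise distinctness of five points. -/
def PD5 {X : Type*} (a b c d e : X) : Prop :=
  a ≠ b ∧ a ≠ c ∧ a ≠ d ∧ a ≠ e ∧ b ≠ c ∧ b ≠ d ∧ b ≠ e ∧ c ≠ d ∧ c ≠ e ∧ d ≠ e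

/-!
Moving the auxiliary point from `ν` to `ν'` changes `R ξ ζ η ν` by `R ξ ζ ν ν'`, by the cocycle
identity in the second pair. Summed over the three cyclic rotations of `(ξ, ζ, η)`, these changes
cancel by the cocycle identity in the first pair.
-/

/-- An anti-symmetric cross ratio with values in an additive commutative group. The axioms are
imposed only on pairwise distinct arguments. Boundedness is kept separate, and the values on
degenerate quadruples are left arbitrary. -/
structure IsAntisymmCrossRatio {X A : Type*} [AddCommGroup A] (R : X → X → X → X → A) : Prop where
  swap_left : ∀ a b c d, PD4 a b c d → R a b c d = -R b a c d
  swap_pairs : ∀ a b c d, PD4 a b c d → R c d a b = -R a b c d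
  add_left : ∀ a b b' c d, PD5 a b b' c d → R a b c d + R b b' c d = R a b' c d

/-- The sum of `R` over the cyclic rotations of its first three arguments. For an anti-symmetric
cross ratio, half of `cyclicSum R ξ ζ η ν` is `φ(ξ, η, ζ)`. -/
def cyclicSum {X A : Type*} [Add A] (R : X → X → X → X → A) (a b c d : X) : A :=
  R a b c d + R b c a d + R c a b d

namespace IsAntisymmCrossRatio

variable {X A : Type*} [AddCommGroup A] {R : X → X → X → X → A} {a b c d e : X}

theorem add_right (hR : IsAntisymmCrossRatio R) (h : PD5 a b c d e) :
    R a b c d + R a b d e = R a b c e := by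
  have hcd : R a b c d = -R c d a b := hR.swap_pairs _ _ _ _ (by grind [PD4, PD5])
  have hde : R a b d e = -R d e a b := hR.swap_pairs _ _ _ _ (by grind [PD4, PD5])
  have hce : R a b c e = -R c e a b := hR.swap_pairs _ _ _ _ (by grind [PD4, PD5])
  have hadd : R c d a b + R d e a b = R c e a b := hR.add_left _ _ _ _ _ (by grind [PD5])
  rw [hcd, hde, hce, ← hadd, neg_add]

theorem add_cyclic_left_eq_zero (hR : IsAntisymmCrossRatio R) (h : PD5 a b c d e) :
    R a b d e + R b c d e + R c a d e = 0 := by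
  have hswap : R a c d e = -R c a d e := hR.swap_left _ _ _ _ (by grind [PD4, PD5])
  rw [hR.add_left _ _ _ _ _ h, hswap, neg_add_cancel]

theorem cyclicSum_eq (hR : IsAntisymmCrossRatio R) (hd : PD4 a b c d) (he : PD4 a b c e) :
    cyclicSum R a b c d = cyclicSum R a b c e := by
  obtain rfl | hde := eq_or_ne d e
  · rfl
  have h : PD5 a b c d e := by grind [PD4, PD5]
  have hab : R a b c d + R a b d e = R a b c e := hR.add_right h
  have hbc : R b c a d + R b c d e = R b c a e := hR.add_right (by grind [PD5])
  have hca : R c a b d + R c a d e = R c a b e := hR.add_right (by grind [PD5])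
  calc cyclicSum R a b c d
      = cyclicSum R a b c d + (R a b d e + R b c d e + R c a d e) := by
        rw [hR.add_cyclic_left_eq_zero h, add_zero]
    _ = cyclicSum R a b c e := by
        simp only [cyclicSum, ← hab, ← hbc, ← hca]
        abel

end IsAntisymmCrossRatio

theorem norm_cyclicSum_le {X E : Type*} [SeminormedAddCommGroup E] {R : X → X → X → X → E} {M : ℝ}
    (hM : ∀ a b c d, PD4 a b c d → ‖R a b c d‖ ≤ M) {a b c d : X} (h : PD4 a b c d) :
    ‖cyclicSum R a b c d‖ ≤ 3 * M :=
  calc ‖cyclicSum R a b c d‖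
      ≤ ‖R a b c d‖ + ‖R b c a d‖ + ‖R c a b d‖ := norm_add₃_le
    _ ≤ M + M + M := by
        gcongr
        · exact hM _ _ _ _ h
        · exact hM _ _ _ _ (by grind [PD4])
        · exact hM _ _ _ _ (by grind [PD4])
    _ = 3 * M := by ring

theorem stmt0_general {X E : Type*} [SeminormedAddCommGroup E] [NormedSpace ℝ E]
    {R : X → X → X → X → E} (hR : IsAntisymmCrossRatio R) :
    (∀ ξ ζ η ν ν', PD3 ξ ζ η → ν ≠ ξ → ν ≠ ζ → ν ≠ η → ν' ≠ ξ → ν' ≠ ζ → ν' ≠ η →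
      cyclicSum R ξ ζ η ν = cyclicSum R ξ ζ η ν') ∧
    (∀ M, (∀ a b c d, PD4 a b c d → ‖R a b c d‖ ≤ M) →
      ∀ ξ ζ η ν, PD3 ξ ζ η → ν ≠ ξ → ν ≠ ζ → ν ≠ η →
        ‖(1 / 2 : ℝ) • cyclicSum R ξ ζ η ν‖ ≤ 3 * M / 2) := by
  refine ⟨fun ξ ζ η ν ν' _ _ _ _ _ _ _ ↦ ?_, fun M hM ξ ζ η ν _ _ _ _ ↦ ?_⟩
  · exact hR.cyclicSum_eq (by grind [PD3, PD4]) (by grind [PD3, PD4])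
  · have hsum : ‖cyclicSum R ξ ζ η ν‖ ≤ 3 * M := norm_cyclicSum_le hM (by grind [PD3, PD4])
    rw [norm_smul_of_nonneg (by norm_num)]
    linarith

/-- for an anti-symmetric cross ratio `R` on an infinite set `X`, the
cyclic sum `R ξ ζ η ν + R ζ η ξ ν + R η ξ ζ ν` does not depend on the auxiliary point
`ν ∉ {ξ, ζ, η}`, so `φ (ξ,η,ζ) := (1/2)` times this sum is well defined; moreover if
`|R| ≤ M` on pairwise distinct quadruples then `|φ| ≤ 3 M / 2`. -/
theorem stmt0 {X : Type*} [Infinite X] (R : X → X → X → X → ℝ)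
    (hbdd : ∃ M, ∀ a b c d, PD4 a b c d → |R a b c d| ≤ M)
    (hanti1 : ∀ a b c d, PD4 a b c d → R a b c d = - R b a c d)
    (hanti2 : ∀ a b c d, PD4 a b c d → R c d a b = - R a b c d)
    (hcoc : ∀ a b b' c d, PD5 a b b' c d → R a b c d + R b b' c d = R a b' c d)
    (hext1 : ∀ a b c, PD3 a b c → R a a b c = 0)
    (hext2 : ∀ a b c, PD3 a b c → R b c a a = 0) :
    (∀ ξ ζ η ν ν', PD3 ξ ζ η → ν ≠ ξ → ν ≠ ζ → ν ≠ η → ν' ≠ ξ → ν' ≠ ζ → ν' ≠ η →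
      R ξ ζ η ν + R ζ η ξ ν + R η ξ ζ ν
        = R ξ ζ η ν' + R ζ η ξ ν' + R η ξ ζ ν') ∧
    (∀ M, (∀ a b c d, PD4 a b c d → |R a b c d| ≤ M) →
      ∀ ξ ζ η ν, PD3 ξ ζ η → ν ≠ ξ → ν ≠ ζ → ν ≠ η →
        |(1 / 2 : ℝ) * (R ξ ζ η ν + R ζ η ξ ν + R η ξ ζ ν)| ≤ 3 * M / 2) :=
  stmt0_general ⟨hanti1, hanti2, hcoc⟩
end

section
/- Let X be a set with infinitely many points, let R be an anti-symmetric cross ratio on X, and let φ be the induced function on triples (extended by 0 on degenerate triples). Then φ satisfies the homogeneous cocycle equation for all quadruples of points: for all a, b, c, d ∈ X, φ(b,c,d) − φ(a,c,d) + φ(a,b,d) − φ(a,b,c) = 0. -/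
/-!
The value of `φ` does not depend on the auxiliary point `ν`, so for pairwise distinct `a, b, c, d`
each of the four triples can be evaluated at the one point of the quadruple that it omits. All
twelve resulting values of `R` are then taken at permutations of `(a, b, c, d)`, and they cancel
in pairs by the symmetry `R x y z w = R w z x y`. On quadruples with a repeated point the equation
holds for every alternating function of three points, and `φ` is alternating because `R` is
antisymmetric in its first two arguments.
-/

section AlternatingFunctions

variable {X M : Type*} [AddCommGroup M]

/-- The homogeneous coboundary of a `2`-cochain `φ` on `X`; the cocycle equation says that it
vanishes. -/
def coboundary (φ : X → X → X → M) (a b c d : X) : M :=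
  φ b c d - φ a c d + φ a b d - φ a b c

/-- Alternating functions of three points, vanishing on triples with a repeated entry. Mathlib's
`AlternatingMap` is not applicable since `X` carries no linear structure. The sign rule is imposed
on the two adjacent transpositions only, which generate the permutations of three letters. -/
structure IsAlternating (φ : X → X → X → M) : Prop where
  eq_zero_of_not_pd3 : ∀ a b c, ¬ PD3 a b c → φ a b c = 0
  swap_left : ∀ a b c, φ b a c = -φ a b c
  swap_right : ∀ a b c, φ a c b = -φ a b c

theorem IsAlternating.coboundary_eq_zero_of_not_pd4 {φ : X → X → X → M} (h : IsAlternating φ)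
    {a b c d : X} (hdeg : ¬ PD4 a b c d) : coboundary φ a b c d = 0 := by
  have h₁₂ : ∀ x y, φ x x y = 0 := fun x y => h.eq_zero_of_not_pd3 _ _ _ fun hd => hd.1 rfl
  have h₁₃ : ∀ x y, φ x y x = 0 := fun x y => h.eq_zero_of_not_pd3 _ _ _ fun hd => hd.2.1 rfl
  have h₂₃ : ∀ x y, φ y x x = 0 := fun x y => h.eq_zero_of_not_pd3 _ _ _ fun hd => hd.2.2 rfl
  have hrepeat : a = b ∨ a = c ∨ a = d ∨ b = c ∨ b = d ∨ c = d := by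
    simpa only [PD4, not_and_or, not_ne_iff] using hdeg
  unfold coboundary
  rcases hrepeat with rfl | rfl | rfl | rfl | rfl | rfl
  · simp [h₁₂]
  · simp [h₁₂, h₁₃, h.swap_left a b d]
  · simp [h₁₃, h.swap_left a b c, h.swap_right b a c]
  · simp [h₁₂, h₂₃]
  · simp [h₁₃, h₂₃, h.swap_right a b c]
  · simp [h₂₃]

end AlternatingFunctions

theorem exists_pd4_of_three_lt_card {X : Type*} (hX : 3 < ENat.card X) {a b c : X}
    (h : PD3 a b c) : ∃ d, PD4 a b c d := by
  by_contra! hnone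
  have hcover : (Set.univ : Set X) ⊆ {a, b, c} := by
    intro d _
    have hd : ¬ PD4 a b c d := hnone d
    grind [PD3, PD4]
  have hcard : ({a, b, c} : Set X).encard = 3 :=
    Set.encard_eq_three.mpr ⟨a, b, c, h.1, h.2.1, h.2.2, rfl⟩
  exact hX.not_ge (Set.encard_univ X ▸ hcard ▸ Set.encard_le_encard hcover)

section CrossRatio

variable {X M : Type*} [AddCommGroup M] {R : X → X → X → X → M}

/-- Twice the value at `(ξ, η, ζ)` of the function on triples induced by the cross ratio `R`,
computed with the auxiliary point `ν`; omitting the factor `1 / 2` allows values in any additive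
commutative group. -/
def tripleSum (R : X → X → X → X → M) (ξ η ζ ν : X) : M :=
  R ξ ζ η ν + R ζ η ξ ν + R η ξ ζ ν

theorem tripleSum_swap_left (hswap : ∀ a b c d, PD4 a b c d → R a b c d = -R b a c d)
    {ξ η ζ ν : X} (h : PD4 ξ η ζ ν) : tripleSum R η ξ ζ ν = -tripleSum R ξ η ζ ν := by
  unfold tripleSum
  rw [hswap ξ ζ η ν (by grind [PD4]), hswap ζ η ξ ν (by grind [PD4]),
    hswap η ξ ζ ν (by grind [PD4])]
  abel

theorem tripleSum_swap_right (hswap : ∀ a b c d, PD4 a b c d → R a b c d = -R b a c d)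
    {ξ η ζ ν : X} (h : PD4 ξ η ζ ν) : tripleSum R ξ ζ η ν = -tripleSum R ξ η ζ ν := by
  unfold tripleSum
  rw [hswap ξ ζ η ν (by grind [PD4]), hswap ζ η ξ ν (by grind [PD4]),
    hswap η ξ ζ ν (by grind [PD4])]
  abel

theorem crossRatio_rotate (hswap : ∀ a b c d, PD4 a b c d → R a b c d = -R b a c d)
    (hpair : ∀ a b c d, PD4 a b c d → R c d a b = -R a b c d)
    {a b c d : X} (h : PD4 a b c d) : R a b c d = R d c a b := by
  rw [hswap d c a b (by grind [PD4]), hpair a b c d h, neg_neg]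

theorem tripleSum_coboundary_eq_zero (hswap : ∀ a b c d, PD4 a b c d → R a b c d = -R b a c d)
    (hpair : ∀ a b c d, PD4 a b c d → R c d a b = -R a b c d)
    {a b c d : X} (h : PD4 a b c d) :
    tripleSum R b c d a - tripleSum R a c d b + tripleSum R a b d c - tripleSum R a b c d = 0 := by
  have rotate {x y z w : X} (hd : PD4 x y z w) := crossRatio_rotate hswap hpair hd
  have bdca : R b d c a = R a c b d := rotate (by grind [PD4])
  have cbda : R c b d a = R a d c b := rotate (by grind [PD4])
  have dbac : R d b a c = R c a d b := rotate (by grind [PD4])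
  have adbc : R a d b c = R c b a d := rotate (by grind [PD4])
  have bacd : R b a c d = R d c b a := rotate (by grind [PD4])
  have dcab : R d c a b = R b a d c := rotate (by grind [PD4])
  unfold tripleSum
  rw [bdca, cbda, dbac, adbc, bacd, dcab]
  abel

variable {k : Type*} [DistribSMul k M] {κ : k} {φ : X → X → X → M}

theorem isAlternating_of_eq_smul_tripleSum (hX : 3 < ENat.card X)
    (hswap : ∀ a b c d, PD4 a b c d → R a b c d = -R b a c d)
    (hφ : ∀ ξ η ζ ν, PD4 ξ η ζ ν → φ ξ η ζ = κ • tripleSum R ξ η ζ ν)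
    (hφdeg : ∀ ξ η ζ, ¬ PD3 ξ η ζ → φ ξ η ζ = 0) : IsAlternating φ where
  eq_zero_of_not_pd3 := hφdeg
  swap_left a b c := by
    by_cases h : PD3 a b c
    · obtain ⟨ν, hν⟩ := exists_pd4_of_three_lt_card hX h
      rw [hφ b a c ν (by grind [PD4]), hφ a b c ν hν, tripleSum_swap_left hswap hν, smul_neg]
    · rw [hφdeg a b c h, hφdeg b a c (by grind [PD3]), neg_zero]
  swap_right a b c := by
    by_cases h : PD3 a b c
    · obtain ⟨ν, hν⟩ := exists_pd4_of_three_lt_card hX h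
      rw [hφ a c b ν (by grind [PD4]), hφ a b c ν hν, tripleSum_swap_right hswap hν, smul_neg]
    · rw [hφdeg a b c h, hφdeg a c b (by grind [PD3]), neg_zero]

theorem coboundary_eq_zero_of_eq_smul_tripleSum
    (hswap : ∀ a b c d, PD4 a b c d → R a b c d = -R b a c d)
    (hpair : ∀ a b c d, PD4 a b c d → R c d a b = -R a b c d)
    (hφ : ∀ ξ η ζ ν, PD4 ξ η ζ ν → φ ξ η ζ = κ • tripleSum R ξ η ζ ν)
    {a b c d : X} (h : PD4 a b c d) : coboundary φ a b c d = 0 := by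
  unfold coboundary
  rw [hφ b c d a (by grind [PD4]), hφ a c d b (by grind [PD4]), hφ a b d c (by grind [PD4]),
    hφ a b c d h, ← smul_sub, ← smul_add, ← smul_sub,
    tripleSum_coboundary_eq_zero hswap hpair h, smul_zero]

end CrossRatio

theorem stmt2_general {X M k : Type*} [AddCommGroup M] [DistribSMul k M]
    (hX : 3 < ENat.card X) (R : X → X → X → X → M) (φ : X → X → X → M) (κ : k)
    (hswap : ∀ a b c d, PD4 a b c d → R a b c d = -R b a c d)
    (hpair : ∀ a b c d, PD4 a b c d → R c d a b = -R a b c d)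
    (hφ : ∀ ξ η ζ ν, PD4 ξ η ζ ν → φ ξ η ζ = κ • (R ξ ζ η ν + R ζ η ξ ν + R η ξ ζ ν))
    (hφdeg : ∀ ξ η ζ, ¬ PD3 ξ η ζ → φ ξ η ζ = 0) (a b c d : X) :
    φ b c d - φ a c d + φ a b d - φ a b c = 0 := by
  by_cases h : PD4 a b c d
  · exact coboundary_eq_zero_of_eq_smul_tripleSum hswap hpair hφ h
  · exact (isAlternating_of_eq_smul_tripleSum hX hswap hφ hφdeg).coboundary_eq_zero_of_not_pd4 h

/-- the function `φ` on triples induced by an anti-symmetric cross ratio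
`R` on an infinite set `X` (extended by `0` on degenerate triples) satisfies the
homogeneous cocycle equation for all quadruples of points. -/
theorem stmt2 {X : Type*} [Infinite X] (R : X → X → X → X → ℝ) (φ : X → X → X → ℝ)
    (hbdd : ∃ M, ∀ a b c d, PD4 a b c d → |R a b c d| ≤ M)
    (hanti1 : ∀ a b c d, PD4 a b c d → R a b c d = - R b a c d)
    (hanti2 : ∀ a b c d, PD4 a b c d → R c d a b = - R a b c d)
    (hcoc : ∀ a b b' c d, PD5 a b b' c d → R a b c d + R b b' c d = R a b' c d)
    (hext1 : ∀ a b c, PD3 a b c → R a a b c = 0)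
    (hext2 : ∀ a b c, PD3 a b c → R b c a a = 0)
    (hφ : ∀ ξ η ζ ν, PD3 ξ η ζ → ν ≠ ξ → ν ≠ η → ν ≠ ζ →
      φ ξ η ζ = (1 / 2 : ℝ) * (R ξ ζ η ν + R ζ η ξ ν + R η ξ ζ ν))
    (hφdeg : ∀ ξ η ζ, ¬ PD3 ξ η ζ → φ ξ η ζ = 0) :
    ∀ a b c d : X, φ b c d - φ a c d + φ a b d - φ a b c = 0 := by
  have hX : 3 < ENat.card X := ENat.card_eq_top_of_infinite (α := X) ▸ ENat.natCast_lt_top 3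
  exact stmt2_general hX R φ (1 / 2 : ℝ) hanti1 hanti2
    (fun ξ η ζ ν ⟨h₁₂, h₁₃, h₁₄, h₂₃, h₂₄, h₃₄⟩ =>
      hφ ξ η ζ ν ⟨h₁₂, h₁₃, h₂₃⟩ h₁₄.symm h₂₄.symm h₃₄.symm) hφdeg
end

section
/- Let Γ be a group acting on a set X with infinitely many points, let R be a Γ-invariant anti-symmetric cross ratio on X with |R| ≤ M on pairwise distinct quadruples, and let φ be the induced function on triples. Fix ξ, η ∈ X and define μ_ξ(γ₀,γ₁,γ₂) = φ(γ₀·ξ, γ₁·ξ, γ₂·ξ) and μ_η(γ₀,γ₁,γ₂) = φ(γ₀·η, γ₁·η, γ₂·η) for γ₀,γ₁,γ₂ ∈ Γ. Then there exists a function u : Γ × Γ → ℝ with |u| ≤ 3M everywhere and u(γγ₀, γγ₁) = u(γ₀,γ₁) for all γ, γ₀, γ₁ ∈ Γ, such that μ_ξ(γ₀,γ₁,γ₂) − μ_η(γ₀,γ₁,γ₂) = u(γ₁,γ₂) − u(γ₀,γ₂) + u(γ₀,γ₁) for all γ₀, γ₁, γ₂ ∈ Γ. -/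
/-!
A cochain `c` that is a cocycle on all quadruples has, up to coboundary, the same pullback along
any two maps `f, g : S → X`: the difference is the coboundary of the prism cochain
`c (f s) (f t) (g t) - c (f s) (g s) (g t)`. The function `φ` induced by an antisymmetric cross
ratio `R` is such a cocycle: it recovers `R` as `R a b c d = φ a c d - φ b c d`, and in these terms
the antisymmetry `R c d a b = -R a b c d` is the cocycle identity. For the two orbit maps
`γ ↦ γ • ξ` and `γ ↦ γ • η` the prism cochain is invariant because `φ` is, and `|φ| ≤ 3 / 2 * M`
bounds it by `3 * M`.
-/

open Cardinal

section FourPoints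

variable {X : Type*} {a b c d : X}

namespace PD4

theorem swap_left (h : PD4 a b c d) : PD4 b a c d := by
  grind [PD4]

theorem swap_mid (h : PD4 a b c d) : PD4 a c b d := by
  grind [PD4]

theorem swap_right (h : PD4 a b c d) : PD4 a b d c := by
  grind [PD4]

theorem swap_pairs (h : PD4 a b c d) : PD4 c d a b := by
  grind [PD4]

theorem map (h : PD4 a b c d) {Y : Type*} {f : X → Y} (hf : f.Injective) :
    PD4 (f a) (f b) (f c) (f d) := by
  simpa only [PD4, hf.ne_iff] using h

end PD4

theorem exists_ne_of_three_lt_mk (hX : 3 < #X) (a b c : X) : ∃ d, d ≠ a ∧ d ≠ b ∧ d ≠ c := by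
  obtain ⟨d, hd⟩ := exists_notMem_of_length_lt [a, b, c] hX
  exact ⟨d, by simpa using hd⟩

theorem PD3.exists_pd4 (hX : 3 < #X) (h : PD3 a b c) : ∃ d, PD4 a b c d := by
  obtain ⟨d, hda, hdb, hdc⟩ := exists_ne_of_three_lt_mk hX a b c
  exact ⟨d, by grind [PD3, PD4]⟩

theorem exists_pd4_of_three_lt_mk (hX : 3 < #X) (a : X) : ∃ b c d, PD4 a b c d := by
  obtain ⟨b, hb, -⟩ := exists_ne_of_three_lt_mk hX a a a
  obtain ⟨c, hca, hcb, -⟩ := exists_ne_of_three_lt_mk hX a b b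
  obtain ⟨d, hd⟩ := PD3.exists_pd4 hX ⟨hb.symm, hca.symm, hcb.symm⟩
  exact ⟨b, c, d, hd⟩

end FourPoints

section Cochains

variable {X A : Type*} [AddCommGroup A] {c : X → X → X → A}

/-- The homogeneous cocycle identity for functions on triples, required of all quadruples, with
or without repeated entries. -/
def IsCocycle (c : X → X → X → A) : Prop :=
  ∀ x y z w, c y z w - c x z w + c x y w - c x y z = 0

/-- Alternating functions on triples. Vanishing on triples with a repeated entry is a separate
requirement, since `A` may have `2`-torsion. -/
structure IsAlternating_s4 (c : X → X → X → A) : Prop where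
  swap_left : ∀ x y z, c y x z = -c x y z
  swap_right : ∀ x y z, c x z y = -c x y z
  eq_zero : ∀ {x y z}, ¬PD3 x y z → c x y z = 0

/-- The prism `1`-cochain of a `2`-cochain `c` and two maps `f`, `g`, whose coboundary is the
difference of the pullbacks of `c`: the signed sum of `c` over the two triangles that a diagonal
cuts from the square with vertices `f s`, `f t`, `g t`, `g s`. -/
def prism {S : Type*} (c : X → X → X → A) (f g : S → X) (s t : S) : A :=
  c (f s) (f t) (g t) - c (f s) (g s) (g t)

theorem IsCocycle.comp_sub_comp {S : Type*} (hc : IsCocycle c) (f g : S → X) (r s t : S) :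
    c (f r) (f s) (f t) - c (g r) (g s) (g t) =
      prism c f g s t - prism c f g r t + prism c f g r s := by
  have top := hc (f r) (f s) (f t) (g t)
  have middle := hc (f r) (f s) (g s) (g t)
  have bottom := hc (f r) (g r) (g s) (g t)
  unfold prism
  linear_combination (norm := abel) middle - top - bottom

namespace IsAlternating_s4

theorem rotate (hc : IsAlternating_s4 c) (x y z : X) : c z x y = c x y z := by
  rw [hc.swap_left, hc.swap_right, neg_neg]

theorem isCocycle (hc : IsAlternating_s4 c)
    (h : ∀ x y z w, PD4 x y z w → c y z w - c x z w + c x y w - c x y z = 0) : IsCocycle c := by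
  intro x y z w
  by_cases hd : PD4 x y z w
  · exact h x y z w hd
  have eq_zero₁₂ (x y : X) : c x x y = 0 := hc.eq_zero fun h ↦ h.1 rfl
  have eq_zero₁₃ (x y : X) : c x y x = 0 := hc.eq_zero fun h ↦ h.2.1 rfl
  have eq_zero₂₃ (x y : X) : c x y y = 0 := hc.eq_zero fun h ↦ h.2.2 rfl
  have repeated : x = y ∨ x = z ∨ x = w ∨ y = z ∨ y = w ∨ z = w := by grind [PD4]
  rcases repeated with rfl | rfl | rfl | rfl | rfl | rfl
  · simp [eq_zero₁₂]
  · simp [eq_zero₁₂, eq_zero₁₃, hc.swap_left x y w]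
  · simp [eq_zero₁₃, hc.rotate x y z, hc.rotate z x y]
  · simp [eq_zero₁₂, eq_zero₂₃]
  · simp [eq_zero₁₃, eq_zero₂₃, hc.swap_right x y z]
  · simp [eq_zero₂₃]

end IsAlternating_s4

theorem abs_prism_le {S K : Type*} [AddCommGroup K] [LinearOrder K] [IsOrderedAddMonoid K]
    {c : X → X → X → K} {B : K} (hc : ∀ x y z, |c x y z| ≤ B) (f g : S → X) (s t : S) :
    |prism c f g s t| ≤ B + B :=
  (abs_sub _ _).trans (add_le_add (hc _ _ _) (hc _ _ _))

end Cochains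

/-- The symmetries of an antisymmetric cross ratio: antisymmetry in the first pair of arguments and
under exchange of the two pairs, on pairwise distinct quadruples. -/
structure IsPairAntisymm {X A : Type*} [Neg A] (R : X → X → X → X → A) : Prop where
  swap_left : ∀ {a b c d}, PD4 a b c d → R b a c d = -R a b c d
  swap_pairs : ∀ {a b c d}, PD4 a b c d → R c d a b = -R a b c d

namespace IsPairAntisymm

variable {X A : Type*} [InvolutiveNeg A] {R : X → X → X → X → A} {a b c d : X}

theorem swap_pairs_left (hR : IsPairAntisymm R) (h : PD4 a b c d) :
    R d c a b = R a b c d := by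
  rw [hR.swap_left h.swap_pairs, hR.swap_pairs h, neg_neg]

theorem swap_pairs_right (hR : IsPairAntisymm R) (h : PD4 a b c d) :
    R c d b a = R a b c d := by
  rw [hR.swap_pairs h.swap_left, hR.swap_left h, neg_neg]

theorem swap_right (hR : IsPairAntisymm R) (h : PD4 a b c d) : R a b d c = -R a b c d := by
  rw [hR.swap_pairs h.swap_pairs.swap_left, hR.swap_pairs_left h]

end IsPairAntisymm

/-- `φ` is the function on triples induced by `R`, extended by `0` to triples with a repeated
entry. Requiring the formula for every fourth point `d` includes its independence of `d`. -/
structure IsInducedBy {X K : Type*} [Field K] (φ : X → X → X → K) (R : X → X → X → X → K) :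
    Prop where
  eq_half : ∀ {a b c d}, PD4 a b c d → φ a b c = 1 / 2 * (R a c b d + R c b a d + R b a c d)
  eq_zero : ∀ {a b c}, ¬PD3 a b c → φ a b c = 0

namespace IsInducedBy

section Algebra

variable {X K : Type*} [Field K] {R : X → X → X → X → K} {φ : X → X → X → K}

theorem apply_map (hφ : IsInducedBy φ R) (hX : 3 < #X) {f : X → X} (hf : f.Injective)
    (hR : ∀ a b c d, R (f a) (f b) (f c) (f d) = R a b c d) (a b c : X) :
    φ (f a) (f b) (f c) = φ a b c := by
  by_cases h : PD3 a b c
  · obtain ⟨d, hd⟩ := h.exists_pd4 hX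
    rw [hφ.eq_half hd, hφ.eq_half (hd.map hf)]
    simp only [hR]
  · rw [hφ.eq_zero h, hφ.eq_zero (by simpa only [PD3, hf.ne_iff] using h)]

theorem isAlternating (hφ : IsInducedBy φ R) (hR : IsPairAntisymm R) (hX : 3 < #X) :
    IsAlternating_s4 φ where
  swap_left a b c := by
    by_cases h : PD3 a b c
    · obtain ⟨d, hd⟩ := h.exists_pd4 hX
      rw [hφ.eq_half hd, hφ.eq_half hd.swap_left, hR.swap_left hd,
        hR.swap_left hd.swap_mid, hR.swap_left hd.swap_left.swap_mid]
      ring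
    · rw [hφ.eq_zero h, hφ.eq_zero (by grind [PD3]), neg_zero]
  swap_right a b c := by
    by_cases h : PD3 a b c
    · obtain ⟨d, hd⟩ := h.exists_pd4 hX
      rw [hφ.eq_half hd, hφ.eq_half hd.swap_mid, hR.swap_left hd,
        hR.swap_left hd.swap_mid, hR.swap_left hd.swap_left.swap_mid]
      ring
    · rw [hφ.eq_zero h, hφ.eq_zero (by grind [PD3]), neg_zero]
  eq_zero := hφ.eq_zero

theorem sub_eq_crossRatio [NeZero (2 : K)] (hφ : IsInducedBy φ R) (hR : IsPairAntisymm R)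
    {a b c d : X} (h : PD4 a b c d) : φ a c d - φ b c d = R a b c d := by
  have hacdb : PD4 a c d b := by grind [PD4]
  have hadcb : PD4 a d c b := by grind [PD4]
  have hbcda : PD4 b c d a := by grind [PD4]
  have hcadb : PD4 c a d b := by grind [PD4]
  rw [hφ.eq_half hacdb, hφ.eq_half hbcda, hR.swap_pairs_right hadcb, hR.swap_pairs_left hcadb,
    hR.swap_pairs_left h, hR.swap_pairs_right h.swap_right, hR.swap_right h]
  field_simp
  ring

theorem isCocycle [NeZero (2 : K)] (hφ : IsInducedBy φ R) (hR : IsPairAntisymm R)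
    (hX : 3 < #X) : IsCocycle φ := by
  have hφalt := hφ.isAlternating hR hX
  refine hφalt.isCocycle fun a b c d h ↦ ?_
  have hab := hφ.sub_eq_crossRatio hR h
  have hcd : φ a b c - φ a b d = R c d a b := by
    rw [← hφ.sub_eq_crossRatio hR h.swap_pairs, hφalt.rotate a b c, hφalt.rotate a b d]
  linear_combination -hab - hcd - hR.swap_pairs h

end Algebra

theorem abs_le {X K : Type*} [Field K] [LinearOrder K] [IsStrictOrderedRing K]
    {R : X → X → X → X → K} {φ : X → X → X → K} {M : K} (hφ : IsInducedBy φ R)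
    (hM : ∀ a b c d, PD4 a b c d → |R a b c d| ≤ M) (hX : 3 < #X) (a b c : X) :
    |φ a b c| ≤ 3 / 2 * M := by
  by_cases h : PD3 a b c
  · obtain ⟨d, hd⟩ := h.exists_pd4 hX
    have hsum := (abs_add_three (R a c b d) (R c b a d) (R b a c d)).trans <|
      add_le_add_three (hM _ _ _ _ hd.swap_mid) (hM _ _ _ _ hd.swap_left.swap_mid.swap_left)
        (hM _ _ _ _ hd.swap_left)
    rw [hφ.eq_half hd, abs_mul, abs_of_pos one_half_pos]
    linarith
  · obtain ⟨x, y, z, hd⟩ := exists_pd4_of_three_lt_mk hX a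
    have hM_nonneg : 0 ≤ M := (abs_nonneg _).trans (hM _ _ _ _ hd)
    rw [hφ.eq_zero h, abs_zero]
    positivity

end IsInducedBy

theorem stmt4_general {X Γ K : Type*} [Field K] [LinearOrder K] [IsStrictOrderedRing K]
    [Monoid Γ] [MulAction Γ X] [IsLeftCancelSMul Γ X]
    {R : X → X → X → X → K} {φ : X → X → X → K} {M : K} (hX : 3 < #X)
    (hM : ∀ a b c d, PD4 a b c d → |R a b c d| ≤ M) (hR : IsPairAntisymm R)
    (hinv : ∀ (γ : Γ) (a b c d : X), R (γ • a) (γ • b) (γ • c) (γ • d) = R a b c d)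
    (hφ : IsInducedBy φ R) (ξ η : X) :
    ∃ u : Γ → Γ → K,
      (∀ γ₀ γ₁, |u γ₀ γ₁| ≤ 3 * M) ∧
      (∀ γ γ₀ γ₁, u (γ * γ₀) (γ * γ₁) = u γ₀ γ₁) ∧
      (∀ γ₀ γ₁ γ₂ : Γ,
        φ (γ₀ • ξ) (γ₁ • ξ) (γ₂ • ξ) - φ (γ₀ • η) (γ₁ • η) (γ₂ • η)
          = u γ₁ γ₂ - u γ₀ γ₂ + u γ₀ γ₁) := by
  have hφ_inv (γ : Γ) : ∀ a b c, φ (γ • a) (γ • b) (γ • c) = φ a b c :=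
    hφ.apply_map hX (IsLeftCancelSMul.left_cancel γ) (hinv γ)
  refine ⟨prism φ (· • ξ) (· • η), fun γ₀ γ₁ ↦ ?_, fun γ γ₀ γ₁ ↦ ?_,
    (hφ.isCocycle hR hX).comp_sub_comp (· • ξ) (· • η)⟩
  · calc |prism φ (· • ξ) (· • η) γ₀ γ₁| ≤ 3 / 2 * M + 3 / 2 * M :=
          abs_prism_le (hφ.abs_le hM hX) _ _ _ _
      _ = 3 * M := by ring
  · simp only [prism, mul_smul, hφ_inv]

/-- for a `Γ`-invariant anti-symmetric cross ratio `R` (with `|R| ≤ M` on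
pairwise distinct quadruples) on an infinite `Γ`-set `X` with induced triple function
`φ`, and points `ξ η : X`, the difference of the two induced cochains
`μ_ξ (γ₀,γ₁,γ₂) = φ (γ₀•ξ) (γ₁•ξ) (γ₂•ξ)` and `μ_η` is the homogeneous coboundary of a
left-`Γ`-invariant function `u : Γ × Γ → ℝ` with `|u| ≤ 3 M`. -/
theorem stmt4 {X : Type*} [Infinite X] {Γ : Type*} [Group Γ] [MulAction Γ X]
    (R : X → X → X → X → ℝ) (φ : X → X → X → ℝ) (M : ℝ)
    (hbdd : ∀ a b c d, PD4 a b c d → |R a b c d| ≤ M)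
    (hanti1 : ∀ a b c d, PD4 a b c d → R a b c d = - R b a c d)
    (hanti2 : ∀ a b c d, PD4 a b c d → R c d a b = - R a b c d)
    (hcoc : ∀ a b b' c d, PD5 a b b' c d → R a b c d + R b b' c d = R a b' c d)
    (hext1 : ∀ a b c, PD3 a b c → R a a b c = 0)
    (hext2 : ∀ a b c, PD3 a b c → R b c a a = 0)
    (hinv : ∀ (γ : Γ) (a b c d : X), R (γ • a) (γ • b) (γ • c) (γ • d) = R a b c d)
    (hφ : ∀ ξ η ζ ν, PD3 ξ η ζ → ν ≠ ξ → ν ≠ η → ν ≠ ζ →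
      φ ξ η ζ = (1 / 2 : ℝ) * (R ξ ζ η ν + R ζ η ξ ν + R η ξ ζ ν))
    (hφdeg : ∀ ξ η ζ, ¬ PD3 ξ η ζ → φ ξ η ζ = 0)
    (ξ η : X) :
    ∃ u : Γ → Γ → ℝ,
      (∀ γ₀ γ₁, |u γ₀ γ₁| ≤ 3 * M) ∧
      (∀ γ γ₀ γ₁, u (γ * γ₀) (γ * γ₁) = u γ₀ γ₁) ∧
      (∀ γ₀ γ₁ γ₂ : Γ,
        φ (γ₀ • ξ) (γ₁ • ξ) (γ₂ • ξ) - φ (γ₀ • η) (γ₁ • η) (γ₂ • η)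
          = u γ₁ γ₂ - u γ₀ γ₂ + u γ₀ γ₁) := by
  have hR : IsPairAntisymm R :=
    ⟨fun h ↦ by rw [hanti1 _ _ _ _ h, neg_neg], hanti2 _ _ _ _⟩
  have hφR : IsInducedBy φ R :=
    ⟨fun ⟨hab, hac, had, hbc, hbd, hcd⟩ ↦
      hφ _ _ _ _ ⟨hab, hac, hbc⟩ had.symm hbd.symm hcd.symm, hφdeg _ _ _⟩
  exact stmt4_general (natCast_lt_aleph0.trans_le (aleph0_le_mk X)) hbdd hR hinv hφR ξ η
end

section
/- Let Λ be a measurable space with a measure μ, and let G be a group acting on Λ such that for every h ∈ G the map u ↦ h·u is measurable. Let φ : Λ³ → ℝ satisfy φ(h·x, h·y, h·z) = φ(x,y,z) for all h ∈ G and x,y,z ∈ Λ, and φ(x,y,z) = −φ(y,x,z) for all x,y,z ∈ Λ. Fix a, b ∈ Λ and g ∈ G with g·a = b and g·b = a, and assume that the function u ↦ φ(a,b,u) is measurable. Assume further that for every measurable set U ⊆ Λ with μ(U) > 0 which satisfies h·U = U for every h ∈ G with h·a = a and h·b = b, one has μ(U ∩ g·U) > 0. Then φ(a,b,u) = 0 for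 μ-almost every u ∈ Λ. -/
open MeasureTheory Pointwise

/-!
Put `f u = φ a b u`. Invariance and antisymmetry say that `f` is invariant under the stabilizer of
`(a, b)` and changes sign under `g`. If a set `V` of values is disjoint from `-V`, then `f ⁻¹' V` is
a stabilizer-invariant set disjoint from its translate by `g`, hence null. Countably many such open
sets `V` cover all values `t ≠ -t`, so `f = -f` almost everywhere.
-/

section Preimage

variable {G X E : Type*} {f : X → E}

theorem smul_preimage_eq_of_apply_smul_eq [Group G] [MulAction G X] {h : G}
    (hf : ∀ x, f (h • x) = f x) (V : Set E) : h • f ⁻¹' V = f ⁻¹' V := by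
  ext x
  rw [Set.mem_smul_set_iff_inv_smul_mem, Set.mem_preimage, Set.mem_preimage, ← hf, smul_inv_smul]

theorem disjoint_preimage_smul_of_apply_smul_eq_neg [SMul G X] [Neg E] {g : G}
    (hf : ∀ x, f (g • x) = -f x) {V : Set E} (hV : Disjoint V (-V)) :
    Disjoint (f ⁻¹' V) (g • f ⁻¹' V) := by
  rw [Set.disjoint_right]
  rintro _ ⟨x, hx, rfl⟩ hgx
  have hneg : -f x ∈ V := hf x ▸ hgx
  exact hV.notMem_of_mem_left hx hneg

end Preimage

section Neg

variable {E : Type*} [TopologicalSpace E] [T2Space E] [Neg E] [ContinuousNeg E]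

theorem exists_isOpen_disjoint_neg {t : E} (ht : t ≠ -t) :
    ∃ V : Set E, IsOpen V ∧ t ∈ V ∧ Disjoint V (-V) := by
  obtain ⟨A, B, hA, hB, htA, htB, hAB⟩ := t2_separation ht
  refine ⟨A ∩ -B, hA.inter (hB.preimage continuous_neg), ⟨htA, htB⟩, ?_⟩
  rw [Set.disjoint_left]
  exact fun s hs hsneg => hAB.notMem_of_mem_left hsneg.1 hs.2

variable [SecondCountableTopology E] [MeasurableSpace E] [OpensMeasurableSpace E]
  {Λ : Type*} [MeasurableSpace Λ] {μ : Measure Λ} {f : Λ → E}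

theorem ae_eq_neg_self_of_measure_preimage_eq_zero (hf : AEMeasurable f μ)
    (hnull : ∀ V : Set E, IsOpen V → Disjoint V (-V) → μ (f ⁻¹' V) = 0) :
    ∀ᵐ u ∂μ, f u = -f u := by
  suffices hmap : ∀ᵐ t ∂μ.map f, t = -t from ae_of_ae_map hf hmap
  refine measure_null_of_locally_null _ fun t ht => ?_
  obtain ⟨V, hVo, htV, hV⟩ := exists_isOpen_disjoint_neg ht
  refine ⟨V, mem_nhdsWithin_of_mem_nhds (hVo.mem_nhds htV), ?_⟩
  rw [Measure.map_apply_of_aemeasurable hf hVo.measurableSet, hnull V hVo hV]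

theorem ae_eq_neg_self_of_apply_smul_eq_neg {G : Type*} [Group G] [MulAction G Λ]
    (hf : Measurable f) {H : Set G} (hH : ∀ h ∈ H, ∀ u, f (h • u) = f u)
    {g : G} (hg : ∀ u, f (g • u) = -f u)
    (hmeet : ∀ U : Set Λ, MeasurableSet U → 0 < μ U → (∀ h ∈ H, h • U = U) →
      (U ∩ g • U).Nonempty) :
    ∀ᵐ u ∂μ, f u = -f u := by
  refine ae_eq_neg_self_of_measure_preimage_eq_zero hf.aemeasurable fun V hVo hV => ?_
  by_contra hpos
  have hinter : (f ⁻¹' V ∩ g • f ⁻¹' V).Nonempty :=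
    hmeet _ (hf hVo.measurableSet) (pos_iff_ne_zero.mpr hpos)
      fun h hh => smul_preimage_eq_of_apply_smul_eq (hH h hh) V
  exact Set.not_disjoint_iff_nonempty_inter.mpr hinter
    (disjoint_preimage_smul_of_apply_smul_eq_neg hg hV)

end Neg

theorem stmt10_general {Λ : Type*} [MeasurableSpace Λ] (μ : Measure Λ)
    {G X : Type*} [Group G] [MulAction G Λ] [MulAction G X]
    {E : Type*} [AddGroup E] [IsAddTorsionFree E] [TopologicalSpace E] [T2Space E]
    [ContinuousNeg E] [SecondCountableTopology E] [MeasurableSpace E] [OpensMeasurableSpace E]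
    (φ : X → X → Λ → E)
    (hinv : ∀ (h : G) (x y : X) (z : Λ), φ (h • x) (h • y) (h • z) = φ x y z)
    (halt : ∀ (x y : X) (z : Λ), φ x y z = -φ y x z)
    (a b : X) (g : G) (hga : g • a = b) (hgb : g • b = a)
    (hfmeas : Measurable fun u : Λ => φ a b u)
    (hmeet : ∀ U : Set Λ, MeasurableSet U → 0 < μ U →
      (∀ h : G, h • a = a → h • b = b → h • U = U) → (U ∩ g • U).Nonempty) :
    ∀ᵐ u ∂μ, φ a b u = 0 := by
  have hstab : ∀ h ∈ {h : G | h • a = a ∧ h • b = b}, ∀ u, φ a b (h • u) = φ a b u := by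
    rintro h ⟨ha, hb⟩ u
    simpa only [ha, hb] using hinv h a b u
  have hswap : ∀ u, φ a b (g • u) = -φ a b u := fun u => by
    rw [halt, ← hinv g a b u, hga, hgb]
  have hself : ∀ᵐ u ∂μ, φ a b u = -φ a b u :=
    ae_eq_neg_self_of_apply_smul_eq_neg hfmeas hstab hswap fun U hU hpos hinvU =>
      hmeet U hU hpos fun h ha hb => hinvU h ⟨ha, hb⟩
  exact hself.mono fun _ => self_eq_neg.mp

/-- let `G` act measurably on a measure space `(Λ, μ)`, let `φ` be a
`G`-invariant function on triples which is anti-symmetric in its first two arguments,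
let `g` interchange `a` and `b`, and suppose every positive-measure measurable set
invariant under the stabilizer of `(a,b)` meets its image under `g` in positive
measure. Then `φ a b u = 0` for `μ`-almost every `u`. -/
theorem stmt10 {Λ : Type*} [MeasurableSpace Λ] (μ : Measure Λ)
    {G : Type*} [Group G] [MulAction G Λ]
    (hmeas : ∀ h : G, Measurable fun u : Λ => h • u)
    (φ : Λ → Λ → Λ → ℝ)
    (hinv : ∀ (h : G) (x y z : Λ), φ (h • x) (h • y) (h • z) = φ x y z)
    (halt : ∀ x y z : Λ, φ x y z = - φ y x z)
    (a b : Λ) (g : G) (hga : g • a = b) (hgb : g • b = a)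
    (hfmeas : Measurable fun u : Λ => φ a b u)
    (hmix : ∀ U : Set Λ, MeasurableSet U → 0 < μ U →
      (∀ h : G, h • a = a → h • b = b → h • U = U) → 0 < μ (U ∩ g • U)) :
    ∀ᵐ u ∂μ, φ a b u = 0 :=
  stmt10_general μ φ hinv halt a b g hga hgb hfmeas fun U hU hpos hstab =>
    nonempty_of_measure_ne_zero (hmix U hU hpos hstab).ne'
end
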